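/- Separate strict monotonicity of the second equation: define Eq₂(φ, β₁) = −β₁·c + λ·φ·(1 − 1/V) + Σ_{(x,p) : 1 ≤ p, 2p ≤ x ≤ 56} p·κ̃_{x,p} · ((V − 1)/(V·(V^p − 1))) · (1 − 1/(1 + (U/V)^{x−2p}·(1 − V^{−p}))), where U = U(φ, β₁) and V = V(φ, β₁). Then for all (φ, β₁) and (φ, β₁′) in D with β₁ < β₁′, Eq₂(φ, β₁) > Eq₂(φ, β₁′); and for all (φ, β₁) and (φ′, β₁) in D with φ < φ′, Eq₂(φ, β₁) > Eq₂(φ′, β₁). -/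

import Mathlib

/-- `U(φ, β₁) = 9(1−φ)β₃/(Y β₂)` where `β₂ = 3(1−φ) − 2β₁`, `β₃ = β₁ − 2 + 3φ`,
`Y = 3φ − β₁`. -/
noncomputable def Ufun (φ β₁ : ℝ) : ℝ :=
  9 * (1 - φ) * (β₁ - 2 + 3 * φ) / ((3 * φ - β₁) * (3 * (1 - φ) - 2 * β₁))

/-- `V(φ, β₁) = 1 + β₂²/(3 Y β₃)`. -/
noncomputable def Vfun (φ β₁ : ℝ) : ℝ :=
  1 + (3 * (1 - φ) - 2 * β₁) ^ 2 / (3 * (3 * φ - β₁) * (β₁ - 2 + 3 * φ))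

/-- The constraint polygon `D` for the pair `(φ, β₁)`. -/
def Dset : Set (ℝ × ℝ) :=
  {q | 0.525245 ≤ q.1 ∧ q.1 ≤ 0.619063 ∧ 0.33018 ≤ q.2 ∧ q.2 ≤ 0.52891 ∧
    0.33018 ≤ 3 * (1 - q.1) - 2 * q.2 ∧ 3 * (1 - q.1) - 2 * q.2 ≤ 0.52891 ∧
    0.077639 ≤ q.2 - 2 + 3 * q.1 ∧ q.2 - 2 + 3 * q.1 ≤ 0.21782}

/-- `κ_{x,p}` for `λ = 3·4.506 = 13.518`. -/
noncomputable def kappa (x p : ℕ) : ℝ :=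
  (2 : ℝ) ^ (-(x : ℝ)) * (Nat.choose x p : ℝ) *
    (Real.exp (-(13.518 : ℝ)) * (13.518 : ℝ) ^ x / (Nat.factorial x : ℝ))

/-- `κ̃_{x,p}`: `2κ_{x,p}` if `x > 2p`, `κ_{x,p}` if `x = 2p`, `0` if `x < 2p`. -/
noncomputable def kappaT (x p : ℕ) : ℝ :=
  if x < 2 * p then 0 else if 2 * p < x then 2 * kappa x p else kappa x p

/-- The second equation `Eq₂` (with `c = 4.506`, `λ = 13.518`, `x_max = 56`). -/
noncomputable def Eq2 (φ β₁ : ℝ) : ℝ :=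
  -β₁ * 4.506 + 13.518 * φ * (1 - 1 / Vfun φ β₁) +
    ∑ x ∈ Finset.range 57, ∑ p ∈ Finset.range (x + 1),
      if 1 ≤ p ∧ 2 * p ≤ x then
        (p : ℝ) * kappaT x p *
          ((Vfun φ β₁ - 1) / (Vfun φ β₁ * ((Vfun φ β₁) ^ p - 1))) *
          (1 - 1 / (1 + (Ufun φ β₁ / Vfun φ β₁) ^ (x - 2 * p) *
            (1 - (Vfun φ β₁) ^ (-(p : ℤ)))))
      else 0

/-!
In terms of `ρ = log (U / V)` the last factor of each summand of `Eq₂` is a logistic function, of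
slope at most `1/4`, evaluated at `(x - 2p) ρ + log (1 - V⁻ᵖ)`; the middle factor
`1 / (V + V² + ⋯ + Vᵖ)` has slope at most `(p + 1) / (2p)` in `1 / V`. When `φ` or `β₁` increases in
`D`, both `ρ` and `1 / V` increase and `V ≥ 9/8`, so the double sum grows at most as fast as
`0.515 ρ + 3.2 / V`, where `0.515` and `3.2` bound the weighted sums of these slopes. Replacing the
sum by this function leaves an explicit function of `φ`, `β₁` whose partial derivatives are
negative on `D`: homogeneity reduces this to two quartic inequalities in `β₃ / β₂`.
-/

/-- `powSum p v = v + v² + ⋯ + v^p`; for `v ≠ 1` its inverse is `(v - 1) / (v (v^p - 1))`, the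
first factor of the summands of `Eq2`. -/
def powSum {K : Type*} [Semiring K] (p : ℕ) (v : K) : K :=
  ∑ j ∈ Finset.range p, v ^ (j + 1)

theorem powSum_succ {K : Type*} [Semiring K] (p : ℕ) (v : K) :
    powSum (p + 1) v = powSum p v + v ^ (p + 1) :=
  Finset.sum_range_succ _ _

theorem powSum_pos {v : ℝ} (hv : 0 < v) {p : ℕ} (hp : 1 ≤ p) : 0 < powSum p v :=
  Finset.sum_pos (fun _ _ => by positivity) (Finset.nonempty_range_iff.2 (by omega))

theorem powSum_le_powSum {v v' : ℝ} (hv : 0 ≤ v) (h : v ≤ v') (p : ℕ) :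
    powSum p v ≤ powSum p v' :=
  Finset.sum_le_sum fun _ _ => by gcongr

theorem powSum_le_mul_pow {v : ℝ} (hv : 1 ≤ v) (p : ℕ) : powSum p v ≤ p * v ^ p := by
  simpa only [Finset.card_range, nsmul_eq_mul, powSum] using
    Finset.sum_le_card_nsmul (Finset.range p) (fun j => v ^ (j + 1)) (v ^ p) fun j hj =>
      pow_le_pow_right₀ hv (Finset.mem_range.1 hj)

theorem mul_le_powSum {v : ℝ} (hv : 1 ≤ v) (p : ℕ) : p * v ≤ powSum p v := by
  simpa only [Finset.card_range, nsmul_eq_mul, powSum] using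
    Finset.card_nsmul_le_sum (Finset.range p) (fun j => v ^ (j + 1)) v fun j _ =>
      le_self_pow₀ hv j.succ_ne_zero

theorem inv_powSum {v : ℝ} (hv : v ≠ 1) (p : ℕ) :
    (powSum p v)⁻¹ = (v - 1) / (v * (v ^ p - 1)) := by
  rw [powSum, Finset.sum_congr rfl fun j _ => pow_succ' v j, ← Finset.mul_sum, geom_sum_eq hv,
    mul_div_assoc', inv_div]

theorem hasDerivAt_powSum (p : ℕ) (v : ℝ) :
    HasDerivAt (powSum p) (∑ j ∈ Finset.range p, ((j : ℝ) + 1) * v ^ j) v := by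
  refine HasDerivAt.fun_sum fun j _ => ?_
  simpa using hasDerivAt_pow (j + 1) v

-- For `inv_powSum_sub_le`: `1 / powSum p v` as a function of `1 / v` has its greatest slope,
-- namely `(p + 1) / (2p)`, at `v = 1`.
theorem sq_mul_deriv_powSum_le {v : ℝ} (hv : 1 ≤ v) {p : ℕ} (hp : 1 ≤ p) :
    2 * p * (v ^ 2 * ∑ j ∈ Finset.range p, ((j : ℝ) + 1) * v ^ j) ≤ (p + 1) * powSum p v ^ 2 := by
  induction p, hp using Nat.le_induction with
  | base =>
    simp only [powSum, Finset.sum_range_one]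
    norm_num
  | succ p hp ih =>
    have hp0 : (0 : ℝ) < p := by exact_mod_cast hp
    set S := powSum p v
    set A := v ^ 2 * ∑ j ∈ Finset.range p, ((j : ℝ) + 1) * v ^ j
    set P := v ^ (p + 1) with hP
    have : 0 < P := by positivity
    have hS : 0 < S := powSum_pos (zero_lt_one.trans_le hv) hp
    have upper : S * S ≤ p * P * S := by
      gcongr
      exact (powSum_le_mul_pow hv p).trans
        (mul_le_mul_of_nonneg_left (pow_le_pow_right₀ hv p.le_succ) hp0.le)
    have lower : P * (p * v) ≤ P * S := by gcongr; exact mul_le_powSum hv p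
    have last : P * v ≤ P * P := by gcongr; exact le_self_pow₀ hv p.succ_ne_zero
    have hsum : v ^ 2 * ∑ j ∈ Finset.range (p + 1), ((j : ℝ) + 1) * v ^ j =
        A + (p + 1) * (P * v) := by
      rw [Finset.sum_range_succ, mul_add, hP]
      ring
    have cross : 2 * (p + 1) ^ 2 * (P * v) ≤ (2 * p + 3) * (P * S) + (p + 2) * (P * P) :=
      calc 2 * (p + 1) ^ 2 * (P * v) = (2 * p + 3) * (P * (p * v)) + (p + 2) * (P * v) := by ring
        _ ≤ (2 * p + 3) * (P * S) + (p + 2) * (P * P) := by gcongr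
    rw [hsum, powSum_succ]
    push_cast
    refine le_of_mul_le_mul_left ?_ hp0
    calc p * (2 * (p + 1) * (A + (p + 1) * (P * v)))
        = (p + 1) * (2 * p * A) + p * (2 * (p + 1) ^ 2 * (P * v)) := by ring
      _ ≤ (p + 1) * ((p + 1) * S ^ 2) + p * ((2 * p + 3) * (P * S) + (p + 2) * (P * P)) := by gcongr
      _ = p * ((p + 1 + 1) * (S + P) ^ 2) - (p * P * S - S * S) := by ring
      _ ≤ p * ((p + 1 + 1) * (S + P) ^ 2) := by linarith

theorem inv_powSum_sub_le {v v' : ℝ} (hv' : 1 ≤ v') (h : v' ≤ v) {p : ℕ} (hp : 1 ≤ p) :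
    (powSum p v')⁻¹ - (powSum p v)⁻¹ ≤ (p + 1) / (2 * p) * (v'⁻¹ - v⁻¹) := by
  set f : ℝ → ℝ := fun v => (p + 1) / (2 * p) * v⁻¹ - (powSum p v)⁻¹
  set S' : ℝ → ℝ := fun v => ∑ j ∈ Finset.range p, ((j : ℝ) + 1) * v ^ j
  have hf (v : ℝ) (hv : 1 ≤ v) :
      HasDerivAt f ((p + 1) / (2 * p) * -(v ^ 2)⁻¹ - -S' v / powSum p v ^ 2) v :=
    ((hasDerivAt_inv (by positivity)).const_mul _).sub
      ((hasDerivAt_powSum p v).inv (powSum_pos (by positivity) hp).ne')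
  have hf' (v : ℝ) (hv : 1 ≤ v) : (p + 1) / (2 * p) * -(v ^ 2)⁻¹ - -S' v / powSum p v ^ 2 ≤ 0 := by
    have hS := powSum_pos (zero_lt_one.trans_le hv) hp
    have : S' v / powSum p v ^ 2 ≤ (p + 1) / (2 * p * v ^ 2) := by
      rw [div_le_div_iff₀ (by positivity) (by positivity)]
      linarith [sq_mul_deriv_powSum_le hv hp]
    calc _ = S' v / powSum p v ^ 2 - (p + 1) / (2 * p * v ^ 2) := by field_simp; ring
      _ ≤ 0 := sub_nonpos.2 this
  have anti : AntitoneOn f (Set.Ici 1) := by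
    refine antitoneOn_of_hasDerivWithinAt_nonpos (convex_Ici 1)
      (fun v hv => (hf v hv).continuousAt.continuousWithinAt)
      (fun v hv => (hf v (interior_subset hv)).hasDerivWithinAt)
      (fun v hv => hf' v (interior_subset hv))
  have := anti hv' (hv'.trans h) h
  simp only [f] at this
  linarith

theorem sigmoid_sub_sigmoid_le {x y : ℝ} (h : x ≤ y) :
    y.sigmoid - x.sigmoid ≤ 1 / 4 * (y - x) := by
  refine image_sub_le_mul_sub_of_deriv_le differentiable_sigmoid (fun z => ?_) h
  rw [Real.deriv_sigmoid]
  nlinarith [sq_nonneg (z.sigmoid - 1 / 2)]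

theorem sigmoid_log {z : ℝ} (hz : 0 < z) : (Real.log z).sigmoid = 1 - 1 / (1 + z) := by
  rw [Real.sigmoid_def, Real.exp_neg, Real.exp_log hz]
  field_simp
  ring

/-- The summand of `Eq2` without its weight `p κ̃`, as a function of `ρ = log (U / V)` and `v = V`;
`n` stands for `x - 2p`. -/
noncomputable def summand (p n : ℕ) (ρ v : ℝ) : ℝ :=
  (powSum p v)⁻¹ * (n * ρ + Real.log (1 - (v ^ p)⁻¹)).sigmoid

theorem summand_log {p : ℕ} (hp : 1 ≤ p) (n : ℕ) {R v : ℝ} (hR : 0 < R) (hv : 1 < v) :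
    summand p n (Real.log R) v =
      (v - 1) / (v * (v ^ p - 1)) * (1 - 1 / (1 + R ^ n * (1 - v ^ (-(p : ℤ))))) := by
  have hvp : 0 < 1 - (v ^ p)⁻¹ := sub_pos.2 (inv_lt_one_of_one_lt₀ (one_lt_pow₀ hv (by omega)))
  rw [summand, inv_powSum hv.ne', ← Real.log_pow, ← Real.log_mul (by positivity) hvp.ne',
    sigmoid_log (by positivity), zpow_neg, zpow_natCast]

theorem summand_sub_le {p : ℕ} (hp : 1 ≤ p) (n : ℕ) {ρ ρ' v v' : ℝ} (hρ : ρ ≤ ρ') (hv' : 1 < v')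
    (hv : v' ≤ v) :
    summand p n ρ' v' - summand p n ρ v ≤
      (powSum p v')⁻¹ * (n / 4) * (ρ' - ρ) + (p + 1) / (2 * p) * (v'⁻¹ - v⁻¹) := by
  set G := (powSum p v)⁻¹
  set G' := (powSum p v')⁻¹
  set L := Real.log (1 - (v ^ p)⁻¹)
  set L' := Real.log (1 - (v' ^ p)⁻¹)
  have hG' : 0 ≤ G' := (inv_pos.2 (powSum_pos (by positivity) hp)).le
  have hGG' : G ≤ G' :=
    inv_anti₀ (powSum_pos (by positivity) hp) (powSum_le_powSum (by positivity) hv p)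
  have hL : L' ≤ L := by
    refine Real.log_le_log ?_ (by gcongr)
    exact sub_pos.2 (inv_lt_one_of_one_lt₀ (one_lt_pow₀ hv' (by omega)))
  have shift : (n * ρ' + L').sigmoid - (n * ρ + L').sigmoid ≤ n / 4 * (ρ' - ρ) :=
    (sigmoid_sub_sigmoid_le (by gcongr)).trans_eq (by ring)
  calc summand p n ρ' v' - summand p n ρ v
      = G' * ((n * ρ' + L').sigmoid - (n * ρ + L').sigmoid)
        - G' * ((n * ρ + L).sigmoid - (n * ρ + L').sigmoid)
        + (G' - G) * (n * ρ + L).sigmoid := by simp only [summand, G, G', L, L']; ring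
    _ ≤ G' * (n / 4 * (ρ' - ρ)) - 0 + (G' - G) * 1 := by
      have := sub_nonneg.2 hGG'
      gcongr
      · exact mul_nonneg hG' (sub_nonneg.2 (Real.sigmoid_le (by gcongr)))
      · exact Real.sigmoid_le_one _
    _ ≤ G' * (n / 4) * (ρ' - ρ) + (p + 1) / (2 * p) * (v'⁻¹ - v⁻¹) := by
      linarith [inv_powSum_sub_le hv'.le hv hp]

/-- The index set of the double sum in `Eq2`, cut off at `x < N` (there `N = 57`): the pairs
`⟨x, p⟩` with `1 ≤ p` and `2p ≤ x`. Irreducible, so that no unification enumerates it. -/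
@[irreducible] def profiles (N : ℕ) : Finset (Σ _ : ℕ, ℕ) :=
  ((Finset.range N).sigma fun x => Finset.range (x + 1)).filter fun i => 1 ≤ i.2 ∧ 2 * i.2 ≤ i.1

theorem one_le_of_mem_profiles {N : ℕ} {i : Σ _ : ℕ, ℕ} (hi : i ∈ profiles N) : 1 ≤ i.2 := by
  rw [profiles, Finset.mem_filter] at hi
  exact hi.2.1

theorem sum_profiles (N : ℕ) (f : ℕ → ℕ → ℝ) :
    ∑ i ∈ profiles N, f i.1 i.2 =
      ∑ x ∈ Finset.range N, ∑ p ∈ Finset.range (x + 1),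
        if 1 ≤ p ∧ 2 * p ≤ x then f x p else 0 := by
  rw [profiles, Finset.sum_filter, Finset.sum_sigma]

/-- The rational factor of `κ̃_{x,p} = e^{-λ} · kappaTCoeff x p`; here `6759/1000 = λ/2`. -/
def kappaTCoeff (x p : ℕ) : ℚ :=
  (if x < 2 * p then 0 else if 2 * p < x then 2 else 1) * x.choose p * (6759 / 1000) ^ x /
    x.factorial

theorem kappaTCoeff_nonneg (x p : ℕ) : 0 ≤ kappaTCoeff x p := by
  unfold kappaTCoeff
  split_ifs <;> positivity

theorem kappa_eq (x p : ℕ) :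
    kappa x p = Real.exp (-13.518) * (x.choose p * (6759 / 1000) ^ x / x.factorial) := by
  rw [kappa, Real.rpow_neg zero_le_two, Real.rpow_natCast, ← inv_pow,
    show (6759 / 1000 : ℝ) = 2⁻¹ * 13.518 by norm_num, mul_pow]
  ring

theorem kappaT_eq (x p : ℕ) : kappaT x p = Real.exp (-13.518) * kappaTCoeff x p := by
  unfold kappaT kappaTCoeff
  split_ifs
  · simp
  all_goals
    push_cast
    rw [kappa_eq]
    ring

theorem kappaT_nonneg (x p : ℕ) : 0 ≤ kappaT x p := by
  have := kappaTCoeff_nonneg x p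
  rw [kappaT_eq]
  positivity

theorem le_exp_lambda : 742000 ≤ Real.exp 13.518 := by
  refine le_trans ?_ (Real.sum_le_exp_of_nonneg (by norm_num) 40)
  norm_num [Finset.sum_range_succ, Nat.factorial]

theorem sum_kappaT_mul_le {F : (Σ _ : ℕ, ℕ) → ℚ} {b : ℚ} (hb : 0 ≤ b)
    (h : ∑ i ∈ profiles 57, i.2 * kappaTCoeff i.1 i.2 * F i ≤ 742000 * b) :
    ∑ i ∈ profiles 57, i.2 * kappaT i.1 i.2 * (F i : ℝ) ≤ b := by
  have : (0 : ℝ) ≤ b := by exact_mod_cast hb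
  calc ∑ i ∈ profiles 57, i.2 * kappaT i.1 i.2 * (F i : ℝ)
      = (Real.exp 13.518)⁻¹ * ((∑ i ∈ profiles 57, i.2 * kappaTCoeff i.1 i.2 * F i : ℚ) : ℝ) := by
        push_cast
        rw [Finset.mul_sum]
        refine Finset.sum_congr rfl fun i _ => ?_
        rw [kappaT_eq, Real.exp_neg]
        ring
    _ ≤ (Real.exp 13.518)⁻¹ * (742000 * b) := by
        gcongr
        exact_mod_cast h
    _ ≤ (Real.exp 13.518)⁻¹ * (Real.exp 13.518 * b) := by
        gcongr
        exact le_exp_lambda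
    _ = b := inv_mul_cancel_left₀ (Real.exp_ne_zero _) _

theorem sum_kappaT_mul_inv_slope_le :
    ∑ i ∈ profiles 57, i.2 * kappaT i.1 i.2 * ((i.2 + 1) / (2 * i.2)) ≤ 3.2 := by
  have := sum_kappaT_mul_le (F := fun i => (i.2 + 1) / (2 * i.2)) (b := 3.2) (by norm_num)
    (by decide +kernel)
  push_cast at this
  exact this

theorem sum_kappaT_mul_log_slope_le :
    ∑ i ∈ profiles 57, i.2 * kappaT i.1 i.2 *
      ((powSum i.2 (9 / 8))⁻¹ * ((i.1 - 2 * i.2 : ℕ) / 4)) ≤ 0.515 := by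
  have := sum_kappaT_mul_le (F := fun i => (powSum i.2 (9 / 8))⁻¹ * ((i.1 - 2 * i.2 : ℕ) / 4))
    (b := 0.515) (by norm_num) (by decide +kernel)
  simp only [powSum] at this ⊢
  push_cast at this
  exact this

theorem sum_summand_sub_le {ρ ρ' v v' : ℝ} (hρ : ρ ≤ ρ') (hv' : 9 / 8 ≤ v') (hv : v' ≤ v) :
    ∑ i ∈ profiles 57, i.2 * kappaT i.1 i.2 * summand i.2 (i.1 - 2 * i.2) ρ' v' -
        ∑ i ∈ profiles 57, i.2 * kappaT i.1 i.2 * summand i.2 (i.1 - 2 * i.2) ρ v ≤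
      0.515 * (ρ' - ρ) + 3.2 * (v'⁻¹ - v⁻¹) := by
  have : 0 ≤ ρ' - ρ := sub_nonneg.2 hρ
  have hv0 : 0 ≤ v'⁻¹ - v⁻¹ := sub_nonneg.2 (inv_anti₀ (by linarith) hv)
  have termwise (i : Σ _ : ℕ, ℕ) (hi : i ∈ profiles 57) :
      summand i.2 (i.1 - 2 * i.2) ρ' v' - summand i.2 (i.1 - 2 * i.2) ρ v ≤
        (powSum i.2 (9 / 8))⁻¹ * ((i.1 - 2 * i.2 : ℕ) / 4) * (ρ' - ρ) +
          (i.2 + 1) / (2 * i.2) * (v'⁻¹ - v⁻¹) := by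
    have hp := one_le_of_mem_profiles hi
    refine (summand_sub_le hp _ hρ (by linarith) hv).trans ?_
    gcongr
    · exact powSum_pos (by norm_num) hp
    · exact powSum_le_powSum (by norm_num) hv' _
  calc _ ≤ ∑ i ∈ profiles 57, i.2 * kappaT i.1 i.2 *
          ((powSum i.2 (9 / 8))⁻¹ * ((i.1 - 2 * i.2 : ℕ) / 4) * (ρ' - ρ) +
            (i.2 + 1) / (2 * i.2) * (v'⁻¹ - v⁻¹)) := by
        rw [← Finset.sum_sub_distrib]
        refine Finset.sum_le_sum fun i hi => ?_
        rw [← mul_sub]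
        have := kappaT_nonneg i.1 i.2
        exact mul_le_mul_of_nonneg_left (termwise i hi) (by positivity)
    _ = (∑ i ∈ profiles 57, i.2 * kappaT i.1 i.2 *
            ((powSum i.2 (9 / 8))⁻¹ * ((i.1 - 2 * i.2 : ℕ) / 4))) * (ρ' - ρ) +
          (∑ i ∈ profiles 57, i.2 * kappaT i.1 i.2 * ((i.2 + 1) / (2 * i.2))) * (v'⁻¹ - v⁻¹) := by
        simp only [mul_add, ← mul_assoc, Finset.sum_add_distrib, Finset.sum_mul]
    _ ≤ 0.515 * (ρ' - ρ) + 3.2 * (v'⁻¹ - v⁻¹) := by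
        gcongr
        · exact sum_kappaT_mul_log_slope_le
        · exact sum_kappaT_mul_inv_slope_le

theorem Eq2_eq_sum_summand {φ β₁ : ℝ} (hU : 0 < Ufun φ β₁) (hV : 1 < Vfun φ β₁) :
    Eq2 φ β₁ = -β₁ * 4.506 + 13.518 * φ * (1 - (Vfun φ β₁)⁻¹) +
      ∑ i ∈ profiles 57, i.2 * kappaT i.1 i.2 *
        summand i.2 (i.1 - 2 * i.2) (Real.log (Ufun φ β₁ / Vfun φ β₁)) (Vfun φ β₁) := by
  rw [Eq2, one_div, sum_profiles 57 fun x p => p * kappaT x p *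
    summand p (x - 2 * p) (Real.log (Ufun φ β₁ / Vfun φ β₁)) (Vfun φ β₁)]
  refine congrArg _ (Finset.sum_congr rfl fun x _ => Finset.sum_congr rfl fun p _ => ?_)
  refine if_ctx_congr Iff.rfl (fun h => ?_) fun _ => rfl
  rw [summand_log h.1 _ (div_pos hU (by positivity)) hV, mul_assoc]

/-- `β₂` as a function of `q = (φ, β₁)`. -/
def beta2 (q : ℝ × ℝ) : ℝ := 3 * (1 - q.1) - 2 * q.2

/-- `β₃` as a function of `q = (φ, β₁)`. -/
def beta3 (q : ℝ × ℝ) : ℝ := q.2 - 2 + 3 * q.1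

/-- `β₂ / (β₂ + 3β₃)`, the square root of `1 - 1/V` (see `inv_Vfun`). -/
noncomputable def share (q : ℝ × ℝ) : ℝ := beta2 q / (beta2 q + 3 * beta3 q)

/-- `log (U / V)` (see `log_Ufun_div_Vfun`), split into logarithms of affine functions. -/
noncomputable def logRatio (q : ℝ × ℝ) : ℝ :=
  Real.log 27 + Real.log (1 - q.1) + 2 * Real.log (beta3 q) - Real.log (beta2 q) -
    2 * Real.log (beta2 q + 3 * beta3 q)

/-- The comparison function whose increments dominate those of `Eq2`: the sum is replaced by its
slope bounds `0.515` in `log (U / V)` and `3.2` in `1 / V = 1 - share²`, up to a constant. -/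
noncomputable def majorant (q : ℝ × ℝ) : ℝ :=
  -q.2 * 4.506 + (13.518 * q.1 - 3.2) * share q ^ 2 + 0.515 * logRatio q

theorem Dset.convex : Convex ℝ Dset := by
  rintro p ⟨_, _, _, _, _, _, _, _⟩ q ⟨_, _, _, _, _, _, _, _⟩ a b ha hb hab
  obtain rfl : b = 1 - a := by linarith
  refine ⟨?_, ?_, ?_, ?_, ?_, ?_, ?_, ?_⟩ <;>
    simp only [Prod.fst_add, Prod.snd_add, Prod.smul_fst, Prod.smul_snd, smul_eq_mul] <;> nlinarith

theorem Dset.le_beta2 {q : ℝ × ℝ} (hq : q ∈ Dset) : 0.33018 ≤ beta2 q :=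
  hq.2.2.2.2.1

theorem Dset.beta2_pos {q : ℝ × ℝ} (hq : q ∈ Dset) : 0 < beta2 q :=
  lt_of_lt_of_le (by norm_num) (Dset.le_beta2 hq)

theorem Dset.beta3_pos {q : ℝ × ℝ} (hq : q ∈ Dset) : 0 < beta3 q :=
  lt_of_lt_of_le (by norm_num) hq.2.2.2.2.2.2.1

theorem Dset.fst_lt_one {q : ℝ × ℝ} (hq : q ∈ Dset) : q.1 < 1 :=
  hq.2.1.trans_lt (by norm_num)

theorem Dset.snd_pos {q : ℝ × ℝ} (hq : q ∈ Dset) : 0 < q.2 :=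
  lt_of_lt_of_le (by norm_num) hq.2.2.1

theorem Dset.mul_beta3_le_beta2 {q : ℝ × ℝ} (hq : q ∈ Dset) : 1.5 * beta3 q ≤ beta2 q := by
  have h2 := Dset.le_beta2 hq
  have h3 : beta3 q ≤ 0.21782 := hq.2.2.2.2.2.2.2
  linarith

theorem Dset.beta2_le_mul_beta3 {q : ℝ × ℝ} (hq : q ∈ Dset) : beta2 q ≤ 6.9 * beta3 q := by
  have h2 : beta2 q ≤ 0.52891 := hq.2.2.2.2.2.1
  have h3 : 0.077639 ≤ beta3 q := hq.2.2.2.2.2.2.1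
  linarith

theorem three_mul_fst_sub (q : ℝ × ℝ) : 3 * q.1 - q.2 = 2 * beta2 q + 3 * beta3 q := by
  unfold beta2 beta3
  ring

theorem three_mul_fst (q : ℝ × ℝ) : 3 * q.1 = 1 + beta2 q + 2 * beta3 q := by
  unfold beta2 beta3
  ring

theorem Vfun_eq {q : ℝ × ℝ} (h2 : 0 < beta2 q) (h3 : 0 < beta3 q) :
    Vfun q.1 q.2 =
      (beta2 q + 3 * beta3 q) ^ 2 / (3 * (2 * beta2 q + 3 * beta3 q) * beta3 q) := by
  rw [Vfun, three_mul_fst_sub, ← beta2, ← beta3]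
  field_simp
  ring

theorem Ufun_eq (q : ℝ × ℝ) :
    Ufun q.1 q.2 = 9 * (1 - q.1) * beta3 q / ((2 * beta2 q + 3 * beta3 q) * beta2 q) := by
  rw [Ufun, three_mul_fst_sub, ← beta2, ← beta3]

theorem inv_Vfun {q : ℝ × ℝ} (h2 : 0 < beta2 q) (h3 : 0 < beta3 q) :
    (Vfun q.1 q.2)⁻¹ = 1 - share q ^ 2 := by
  rw [Vfun_eq h2 h3, share]
  field_simp
  ring

theorem Ufun_pos {q : ℝ × ℝ} (h1 : q.1 < 1) (h2 : 0 < beta2 q) (h3 : 0 < beta3 q) :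
    0 < Ufun q.1 q.2 := by
  have := sub_pos.2 h1
  rw [Ufun_eq]
  positivity

theorem log_Ufun_div_Vfun {q : ℝ × ℝ} (h1 : q.1 < 1) (h2 : 0 < beta2 q) (h3 : 0 < beta3 q) :
    Real.log (Ufun q.1 q.2 / Vfun q.1 q.2) = logRatio q := by
  have := sub_pos.2 h1
  have hR : Ufun q.1 q.2 / Vfun q.1 q.2 =
      27 * (1 - q.1) * beta3 q ^ 2 / (beta2 q * (beta2 q + 3 * beta3 q) ^ 2) := by
    rw [Ufun_eq, Vfun_eq h2 h3]
    field_simp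
    norm_num
  rw [hR, Real.log_div (by positivity) (by positivity),
    Real.log_mul (by positivity) (by positivity), Real.log_mul (by positivity) (by positivity),
    Real.log_mul (by positivity) (by positivity), Real.log_pow, Real.log_pow, logRatio]
  push_cast
  ring

theorem Dset.third_le_share {q : ℝ × ℝ} (hq : q ∈ Dset) : 1 / 3 ≤ share q := by
  have h2 := Dset.beta2_pos hq
  have h3 := Dset.beta3_pos hq
  rw [share, div_le_div_iff₀ (by norm_num) (by positivity)]
  linarith [Dset.mul_beta3_le_beta2 hq]

theorem Dset.le_Vfun {q : ℝ × ℝ} (hq : q ∈ Dset) : 9 / 8 ≤ Vfun q.1 q.2 := by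
  have h2 := Dset.beta2_pos hq
  have h3 := Dset.beta3_pos hq
  have hV : 0 < Vfun q.1 q.2 := by
    rw [Vfun_eq h2 h3]
    positivity
  rw [← inv_le_inv₀ hV (by norm_num), inv_Vfun h2 h3]
  nlinarith [Dset.third_le_share hq]

theorem Eq2_lt_Eq2_of_majorant_lt {q q' : ℝ × ℝ} (hq : q ∈ Dset) (hq' : q' ∈ Dset)
    (hs : share q' ≤ share q) (hρ : logRatio q ≤ logRatio q') (hm : majorant q' < majorant q) :
    Eq2 q'.1 q'.2 < Eq2 q.1 q.2 := by
  have normalForm {q : ℝ × ℝ} (hq : q ∈ Dset) :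
      Eq2 q.1 q.2 = -q.2 * 4.506 + 13.518 * q.1 * share q ^ 2 +
        ∑ i ∈ profiles 57, i.2 * kappaT i.1 i.2 *
          summand i.2 (i.1 - 2 * i.2) (logRatio q) (Vfun q.1 q.2) := by
    have h1 := Dset.fst_lt_one hq
    have h2 := Dset.beta2_pos hq
    have h3 := Dset.beta3_pos hq
    rw [Eq2_eq_sum_summand (Ufun_pos h1 h2 h3) (by linarith [Dset.le_Vfun hq]), inv_Vfun h2 h3,
      log_Ufun_div_Vfun h1 h2 h3, sub_sub_cancel]
  have hinv : (Vfun q.1 q.2)⁻¹ ≤ (Vfun q'.1 q'.2)⁻¹ := by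
    rw [inv_Vfun (Dset.beta2_pos hq) (Dset.beta3_pos hq),
      inv_Vfun (Dset.beta2_pos hq') (Dset.beta3_pos hq')]
    have := Dset.third_le_share hq'
    gcongr
  have hV : Vfun q'.1 q'.2 ≤ Vfun q.1 q.2 :=
    (inv_le_inv₀ (by linarith [Dset.le_Vfun hq]) (by linarith [Dset.le_Vfun hq'])).1 hinv
  have hsum := sum_summand_sub_le hρ (Dset.le_Vfun hq') hV
  rw [inv_Vfun (Dset.beta2_pos hq) (Dset.beta3_pos hq),
      inv_Vfun (Dset.beta2_pos hq') (Dset.beta3_pos hq')] at hsum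
  rw [normalForm hq, normalForm hq']
  unfold majorant at hm
  linarith

theorem strictAntiOn_of_hasLineDerivAt_neg {E : Type*} [AddCommGroup E] [PartialOrder E]
    [IsOrderedAddMonoid E] [Module ℝ E] {s : Set E} (hs : Convex ℝ s) {f : E → ℝ}
    (hf : ∀ q ∈ s, ∀ v, 0 < v → ∃ d < 0, HasLineDerivAt ℝ f d q v) : StrictAntiOn f s := by
  intro q hq q' hq' hlt
  set v := q' - q with hv
  set g : ℝ → ℝ := fun t => f (q + t • v)
  have hg (t : ℝ) (ht : t ∈ Set.Icc (0 : ℝ) 1) : ∃ d < 0, HasDerivAt g d t := by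
    obtain ⟨d, hd, hderiv⟩ := hf _ (hs.add_smul_sub_mem hq hq' ht) v (sub_pos.2 hlt)
    refine ⟨d, hd, ?_⟩
    rw [HasLineDerivAt, ← sub_self t] at hderiv
    simpa only [add_assoc, ← hv, ← add_smul, add_sub_cancel] using
      HasDerivAt.comp_sub_const t t hderiv
  have anti : StrictAntiOn g (Set.Icc 0 1) := by
    refine strictAntiOn_of_deriv_neg (convex_Icc 0 1) (fun t ht => ?_) fun t ht => ?_
    · obtain ⟨d, -, hderiv⟩ := hg t ht
      exact hderiv.continuousAt.continuousWithinAt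
    · obtain ⟨d, hd, hderiv⟩ := hg t (interior_subset ht)
      rwa [hderiv.deriv]
  have := anti (Set.left_mem_Icc.2 zero_le_one) (Set.right_mem_Icc.2 zero_le_one) zero_lt_one
  simpa only [g, v, one_smul, zero_smul, add_zero, add_sub_cancel] using this

section LineDeriv

variable {E : Type*} [AddCommGroup E] [Module ℝ E] {f g : E → ℝ} {c d : ℝ} {q v : E}

theorem hasLineDerivAt_of_affine (h : ∀ t : ℝ, f (q + t • v) = f q + t * c) :
    HasLineDerivAt ℝ f c q v := by
  simp only [HasLineDerivAt, h]
  exact (hasDerivAt_mul_const c).const_add (f q)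

theorem hasLineDerivAt_log (hf : HasLineDerivAt ℝ f c q v) (hq : f q ≠ 0) :
    HasLineDerivAt ℝ (fun p => Real.log (f p)) (c / f q) q v := by
  have := HasDerivAt.log hf (by simpa only [zero_smul, add_zero] using hq)
  simp only [zero_smul, add_zero] at this
  exact this

theorem hasLineDerivAt_div (hf : HasLineDerivAt ℝ f c q v) (hg : HasLineDerivAt ℝ g d q v)
    (hq : g q ≠ 0) :
    HasLineDerivAt ℝ (fun p => f p / g p) ((c * g q - f q * d) / g q ^ 2) q v := by
  have := HasDerivAt.fun_div hf hg (by simpa only [zero_smul, add_zero] using hq)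
  simp only [zero_smul, add_zero] at this
  exact this

theorem hasLineDerivAt_mul (hf : HasLineDerivAt ℝ f c q v) (hg : HasLineDerivAt ℝ g d q v) :
    HasLineDerivAt ℝ (fun p => f p * g p) (c * g q + f q * d) q v := by
  have := HasDerivAt.fun_mul hf hg
  simp only [zero_smul, add_zero] at this
  exact this

end LineDeriv

theorem hasLineDerivAt_beta2 (q v : ℝ × ℝ) :
    HasLineDerivAt ℝ beta2 (-3 * v.1 - 2 * v.2) q v :=
  hasLineDerivAt_of_affine fun t => by
    simp only [beta2, Prod.fst_add, Prod.snd_add, Prod.smul_fst, Prod.smul_snd, smul_eq_mul]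
    ring

theorem hasLineDerivAt_beta3 (q v : ℝ × ℝ) : HasLineDerivAt ℝ beta3 (3 * v.1 + v.2) q v :=
  hasLineDerivAt_of_affine fun t => by
    simp only [beta3, Prod.fst_add, Prod.snd_add, Prod.smul_fst, Prod.smul_snd, smul_eq_mul]
    ring

theorem hasLineDerivAt_beta2_add_beta3 (q v : ℝ × ℝ) :
    HasLineDerivAt ℝ (fun p => beta2 p + 3 * beta3 p) (6 * v.1 + v.2) q v :=
  HasDerivAt.congr_deriv (HasDerivAt.add (hasLineDerivAt_beta2 q v)
    (HasDerivAt.const_mul (3 : ℝ) (hasLineDerivAt_beta3 q v))) (by ring)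

theorem hasLineDerivAt_share {q : ℝ × ℝ} (h2 : 0 < beta2 q) (h3 : 0 < beta3 q) (v : ℝ × ℝ) :
    HasLineDerivAt ℝ share
      (-(9 * (beta2 q + beta3 q) / (beta2 q + 3 * beta3 q) ^ 2) * v.1 +
        -(3 * (beta2 q + 2 * beta3 q) / (beta2 q + 3 * beta3 q) ^ 2) * v.2) q v :=
  HasDerivAt.congr_deriv
    (hasLineDerivAt_div (hasLineDerivAt_beta2 q v) (hasLineDerivAt_beta2_add_beta3 q v)
      (by positivity))
    (by field_simp; ring)

theorem hasLineDerivAt_logRatio {q : ℝ × ℝ} (h1 : q.1 < 1) (h2 : 0 < beta2 q) (h3 : 0 < beta3 q)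
    (v : ℝ × ℝ) :
    HasLineDerivAt ℝ logRatio
      ((6 / beta3 q + 3 / beta2 q - 12 / (beta2 q + 3 * beta3 q) - 1 / (1 - q.1)) * v.1 +
        (2 / beta3 q + 2 / beta2 q - 2 / (beta2 q + 3 * beta3 q)) * v.2) q v := by
  have affine : HasLineDerivAt ℝ (fun p : ℝ × ℝ => 1 - p.1) (-v.1) q v :=
    hasLineDerivAt_of_affine fun t => by
      simp only [Prod.fst_add, Prod.smul_fst, smul_eq_mul]
      ring
  have log1 := hasLineDerivAt_log affine (sub_pos.2 h1).ne'
  have log2 := hasLineDerivAt_log (hasLineDerivAt_beta2 q v) h2.ne'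
  have log3 := hasLineDerivAt_log (hasLineDerivAt_beta3 q v) h3.ne'
  have logM := hasLineDerivAt_log (hasLineDerivAt_beta2_add_beta3 q v) (by positivity)
  exact HasDerivAt.congr_deriv (HasDerivAt.sub (HasDerivAt.sub
    (HasDerivAt.add (HasDerivAt.const_add (Real.log 27) log1) (HasDerivAt.const_mul (2 : ℝ) log3))
    log2) (HasDerivAt.const_mul (2 : ℝ) logM)) (by ring)

theorem hasLineDerivAt_majorant {q : ℝ × ℝ} (h1 : q.1 < 1) (h2 : 0 < beta2 q) (h3 : 0 < beta3 q)
    (v : ℝ × ℝ) :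
    HasLineDerivAt ℝ majorant
      ((13.518 * share q ^ 2 - (13.518 * q.1 - 3.2) *
            (2 * share q * (9 * (beta2 q + beta3 q) / (beta2 q + 3 * beta3 q) ^ 2)) +
          0.515 * (6 / beta3 q + 3 / beta2 q - 12 / (beta2 q + 3 * beta3 q) - 1 / (1 - q.1))) *
          v.1 +
        (-4.506 - (13.518 * q.1 - 3.2) *
            (2 * share q * (3 * (beta2 q + 2 * beta3 q) / (beta2 q + 3 * beta3 q) ^ 2)) +
          0.515 * (2 / beta3 q + 2 / beta2 q - 2 / (beta2 q + 3 * beta3 q))) * v.2) q v := by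
  have linear : HasLineDerivAt ℝ (fun p : ℝ × ℝ => -p.2 * 4.506) (-4.506 * v.2) q v :=
    hasLineDerivAt_of_affine fun t => by
      simp only [Prod.snd_add, Prod.smul_snd, smul_eq_mul]
      ring
  have weight : HasLineDerivAt ℝ (fun p : ℝ × ℝ => 13.518 * p.1 - 3.2) (13.518 * v.1) q v :=
    hasLineDerivAt_of_affine fun t => by
      simp only [Prod.fst_add, Prod.smul_fst, smul_eq_mul]
      ring
  have hshare := hasLineDerivAt_share h2 h3 v
  have square := hasLineDerivAt_mul hshare hshare
  simp only [← sq] at square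
  refine HasDerivAt.congr_deriv (HasDerivAt.add (HasDerivAt.add linear
    (hasLineDerivAt_mul weight square))
    (HasDerivAt.const_mul (0.515 : ℝ) (hasLineDerivAt_logRatio h1 h2 h3 v))) ?_
  ring

theorem add_mul_neg_of_pos {v : ℝ × ℝ} (hv : 0 < v) {a b : ℝ} (ha : a < 0) (hb : b < 0) :
    a * v.1 + b * v.2 < 0 := by
  obtain ⟨h1, h2⟩ | ⟨h1, h2⟩ := Prod.lt_iff.1 hv <;>
    simp only [Prod.fst_zero, Prod.snd_zero] at h1 h2 <;> nlinarith

theorem strictAntiOn_share : StrictAntiOn share Dset :=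
  strictAntiOn_of_hasLineDerivAt_neg Dset.convex fun q hq v hv => by
    have h2 := Dset.beta2_pos hq
    have h3 := Dset.beta3_pos hq
    exact ⟨_, add_mul_neg_of_pos hv (neg_neg_of_pos (by positivity))
      (neg_neg_of_pos (by positivity)), hasLineDerivAt_share h2 h3 v⟩

theorem strictMonoOn_logRatio : StrictMonoOn logRatio Dset := by
  suffices StrictAntiOn (fun q => -logRatio q) Dset by simpa using this.neg
  refine strictAntiOn_of_hasLineDerivAt_neg Dset.convex fun q hq v hv => ?_
  have h2 := Dset.beta2_pos hq
  have h3 := Dset.beta3_pos hq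
  refine ⟨_, ?_, HasDerivAt.fun_neg (hasLineDerivAt_logRatio (Dset.fst_lt_one hq) h2 h3 v)⟩
  have hM : 12 / (beta2 q + 3 * beta3 q) < 6 / beta3 q := by
    rw [div_lt_div_iff₀ (by positivity) h3]
    linarith
  have hM' : 2 / (beta2 q + 3 * beta3 q) < 2 / beta2 q := by
    gcongr
    linarith
  have hφ : 1 / (1 - q.1) < 3 / beta2 q := by
    rw [div_lt_div_iff₀ (sub_pos.2 (Dset.fst_lt_one hq)) h2, beta2]
    linarith [Dset.snd_pos hq]
  have hy : 0 < 2 / beta3 q := by positivity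
  linarith [add_mul_neg_of_pos hv
    (show -(6 / beta3 q + 3 / beta2 q - 12 / (beta2 q + 3 * beta3 q) - 1 / (1 - q.1)) < 0
      by linarith)
    (show -(2 / beta3 q + 2 / beta2 q - 2 / (beta2 q + 3 * beta3 q)) < 0 by linarith)]

-- The polynomial is affine in `x` with nonnegative slope, so `x = 0.33018` is the worst case.
theorem majorant_fst_numerator_pos {x r : ℝ} (hx : 0.33018 ≤ x) (hr : 1 / 6.9 ≤ r)
    (hr' : r ≤ 2 / 3) :
    0 < (4.506 * (1 + x * (1 + 2 * r)) - 3.2) * (18 * r * (1 + r)) - 13.518 * x * r * (1 + 3 * r)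
      - 0.515 * (6 + 9 * r + 9 * r ^ 2) * (1 + 3 * r) ^ 2 := by
  have hr0 : 0 < r := lt_of_lt_of_le (by norm_num) hr
  have endpoint : 0 < (4.506 * (1 + 0.33018 * (1 + 2 * r)) - 3.2) * (18 * r * (1 + r))
      - 13.518 * 0.33018 * r * (1 + 3 * r)
      - 0.515 * (6 + 9 * r + 9 * r ^ 2) * (1 + 3 * r) ^ 2 := by
    norm_num at hr
    nlinarith [mul_nonneg (sub_nonneg.2 hr) (sub_nonneg.2 hr'),
      mul_nonneg hr0.le (mul_nonneg (sub_nonneg.2 hr) (sub_nonneg.2 hr')),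
      mul_nonneg (sq_nonneg r) (mul_nonneg (sub_nonneg.2 hr) (sub_nonneg.2 hr'))]
  have slope : 0 ≤ (x - 0.33018) * (13.518 * r * (5 + 15 * r + 12 * r ^ 2)) :=
    mul_nonneg (sub_nonneg.2 hx) (by positivity)
  linarith

theorem majorant_snd_numerator_pos {x r : ℝ} (hx : 0.33018 ≤ x) (hr : 1 / 6.9 ≤ r)
    (hr' : r ≤ 2 / 3) :
    0 < 4.506 * x * r * (1 + 3 * r) ^ 3
      + (4.506 * (1 + x * (1 + 2 * r)) - 3.2) * (6 * r * (1 + 2 * r))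
      - 1.03 * (1 + 3 * r + 3 * r ^ 2) * (1 + 3 * r) ^ 2 := by
  have hr0 : 0 < r := lt_of_lt_of_le (by norm_num) hr
  have endpoint : 0 < 4.506 * 0.33018 * r * (1 + 3 * r) ^ 3
      + (4.506 * (1 + 0.33018 * (1 + 2 * r)) - 3.2) * (6 * r * (1 + 2 * r))
      - 1.03 * (1 + 3 * r + 3 * r ^ 2) * (1 + 3 * r) ^ 2 := by
    norm_num at hr
    nlinarith [mul_nonneg (sub_nonneg.2 hr) (sub_nonneg.2 hr'),
      mul_nonneg hr0.le (mul_nonneg (sub_nonneg.2 hr) (sub_nonneg.2 hr')),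
      mul_nonneg (sq_nonneg r) (mul_nonneg (sub_nonneg.2 hr) (sub_nonneg.2 hr'))]
  have slope : 0 ≤ (x - 0.33018) *
      (4.506 * r * (1 + 3 * r) ^ 3 + 4.506 * (1 + 2 * r) * (6 * r * (1 + 2 * r))) :=
    mul_nonneg (sub_nonneg.2 hx) (by positivity)
  linarith

/-- `β₃ / β₂`, the scale-free variable of the derivatives of `majorant`. -/
noncomputable def betaRatio (q : ℝ × ℝ) : ℝ := beta3 q / beta2 q

theorem Dset.beta3_eq_mul {q : ℝ × ℝ} (hq : q ∈ Dset) : beta3 q = beta2 q * betaRatio q :=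
  (mul_div_cancel₀ _ (Dset.beta2_pos hq).ne').symm

theorem Dset.betaRatio_mem_Icc {q : ℝ × ℝ} (hq : q ∈ Dset) :
    betaRatio q ∈ Set.Icc (1 / 6.9) (2 / 3) := by
  have h2 := Dset.beta2_pos hq
  rw [betaRatio, Set.mem_Icc, div_le_div_iff₀ (by norm_num) h2, div_le_div_iff₀ h2 (by norm_num)]
  constructor <;> linarith [Dset.mul_beta3_le_beta2 hq, Dset.beta2_le_mul_beta3 hq]

theorem majorant_fst_deriv_neg {q : ℝ × ℝ} (hq : q ∈ Dset) :
    13.518 * share q ^ 2 - (13.518 * q.1 - 3.2) *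
        (2 * share q * (9 * (beta2 q + beta3 q) / (beta2 q + 3 * beta3 q) ^ 2)) +
      0.515 * (6 / beta3 q + 3 / beta2 q - 12 / (beta2 q + 3 * beta3 q) - 1 / (1 - q.1)) < 0 := by
  have hφ : 0 < 1 / (1 - q.1) := one_div_pos.2 (sub_pos.2 (Dset.fst_lt_one hq))
  have h2 := Dset.beta2_pos hq
  have hr := Dset.betaRatio_mem_Icc hq
  have hr0 : 0 < betaRatio q := div_pos (Dset.beta3_pos hq) h2
  have hP := majorant_fst_numerator_pos (Dset.le_beta2 hq) hr.1 hr.2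
  have hweight : 13.518 * q.1 = 4.506 * (1 + beta2 q * (1 + 2 * betaRatio q)) := by
    linear_combination 4.506 * three_mul_fst q + 9.012 * Dset.beta3_eq_mul hq
  have hden : 0 < beta2 q * betaRatio q * (1 + 3 * betaRatio q) ^ 3 := by positivity
  rw [share, hweight, Dset.beta3_eq_mul hq]
  generalize beta2 q = x at *
  generalize betaRatio q = r at *
  calc _ = -(((4.506 * (1 + x * (1 + 2 * r)) - 3.2) * (18 * r * (1 + r))
        - 13.518 * x * r * (1 + 3 * r) - 0.515 * (6 + 9 * r + 9 * r ^ 2) * (1 + 3 * r) ^ 2) /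
        (x * r * (1 + 3 * r) ^ 3)) - 0.515 * (1 / (1 - q.1)) := by
        generalize 1 / (1 - q.1) = z
        field_simp
        ring
    _ < 0 := by linarith [div_pos hP hden]

theorem majorant_snd_deriv_neg {q : ℝ × ℝ} (hq : q ∈ Dset) :
    -4.506 - (13.518 * q.1 - 3.2) *
        (2 * share q * (3 * (beta2 q + 2 * beta3 q) / (beta2 q + 3 * beta3 q) ^ 2)) +
      0.515 * (2 / beta3 q + 2 / beta2 q - 2 / (beta2 q + 3 * beta3 q)) < 0 := by
  have h2 := Dset.beta2_pos hq
  have hr := Dset.betaRatio_mem_Icc hq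
  have hr0 : 0 < betaRatio q := div_pos (Dset.beta3_pos hq) h2
  have hP := majorant_snd_numerator_pos (Dset.le_beta2 hq) hr.1 hr.2
  have hweight : 13.518 * q.1 = 4.506 * (1 + beta2 q * (1 + 2 * betaRatio q)) := by
    linear_combination 4.506 * three_mul_fst q + 9.012 * Dset.beta3_eq_mul hq
  have hden : 0 < beta2 q * betaRatio q * (1 + 3 * betaRatio q) ^ 3 := by positivity
  rw [share, hweight, Dset.beta3_eq_mul hq]
  generalize beta2 q = x at *
  generalize betaRatio q = r at *
  calc _ = -((4.506 * x * r * (1 + 3 * r) ^ 3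
        + (4.506 * (1 + x * (1 + 2 * r)) - 3.2) * (6 * r * (1 + 2 * r))
        - 1.03 * (1 + 3 * r + 3 * r ^ 2) * (1 + 3 * r) ^ 2) / (x * r * (1 + 3 * r) ^ 3)) := by
        field_simp
        ring
    _ < 0 := neg_neg_of_pos (div_pos hP hden)

theorem strictAntiOn_majorant : StrictAntiOn majorant Dset :=
  strictAntiOn_of_hasLineDerivAt_neg Dset.convex fun _ hq v hv =>
    ⟨_, add_mul_neg_of_pos hv (majorant_fst_deriv_neg hq) (majorant_snd_deriv_neg hq),
      hasLineDerivAt_majorant (Dset.fst_lt_one hq) (Dset.beta2_pos hq) (Dset.beta3_pos hq) v⟩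

theorem Eq2_separately_strictly_decreasing_general :
    StrictAntiOn (fun q : ℝ × ℝ => Eq2 q.1 q.2) Dset := fun _ hq _ hq' hlt =>
  Eq2_lt_Eq2_of_majorant_lt hq hq' (strictAntiOn_share.antitoneOn hq hq' hlt.le)
    (strictMonoOn_logRatio.monotoneOn hq hq' hlt.le) (strictAntiOn_majorant hq hq' hlt)

/-- separate strict monotonicity of the second equation: `Eq₂` strictly
decreases in each variable separately on `D`. -/
theorem Eq2_separately_strictly_decreasing :
    (∀ φ β₁ β₁' : ℝ, (φ, β₁) ∈ Dset → (φ, β₁') ∈ Dset → β₁ < β₁' →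
        Eq2 φ β₁' < Eq2 φ β₁) ∧
      (∀ φ φ' β₁ : ℝ, (φ, β₁) ∈ Dset → (φ', β₁) ∈ Dset → φ < φ' →
        Eq2 φ' β₁ < Eq2 φ β₁) :=
  ⟨fun _ _ _ h h' hlt =>
      Eq2_separately_strictly_decreasing_general h h' (Prod.mk_lt_mk_iff_right.2 hlt),
    fun _ _ _ h h' hlt =>
      Eq2_separately_strictly_decreasing_general h h' (Prod.mk_lt_mk_iff_left.2 hlt)⟩
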